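/- arXiv:1312.2582 — 4 statements merged into one kernel-verified Lean document; each statement's English description precedes it below -/
import Mathlib

section
/- Let 0 < λ < 1 and let φ : ℝ → ℝ be compactly supported and Hölder continuous with exponent λ (there is M > 0 with |φ(x) − φ(y)| ≤ M·|x − y|^λ for all x, y). Then for every x ∈ ℝ, the limit as a → +∞ of (a/π)·∫_{−∞}^{∞} S_a(x − t)·φ(t) dt exists and equals −(1/π) times the Cauchy principal value lim_{ε→0⁺} ∫_{|t−x|>ε} φ(t)/(x − t) dt. (In other words, as a → ∞ the kernel of the operator (a/π)·(S_a ∗ ·) reduces to the Cauchy kernel.) -/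
open Filter MeasureTheory Topology

/-- The sine integral `si(x) = -∫_x^∞ sin t / t dt`, defined via the improper
(limit of interval integrals) form. -/
noncomputable def si (x : ℝ) : ℝ :=
  - limUnder Filter.atTop (fun R : ℝ => ∫ t in x..R, Real.sin t / t)

/-- The cosine integral `ci(x) = -∫_x^∞ cos t / t dt`, defined via the improper
(limit of interval integrals) form. -/
noncomputable def ci (x : ℝ) : ℝ :=
  - limUnder Filter.atTop (fun R : ℝ => ∫ t in x..R, Real.cos t / t)

/-- The kernel `S_a(x) = sign(x) (si(a|x|) cos(a|x|) - ci(a|x|) sin(a|x|))`, with `S_a(0)=0`. -/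
noncomputable def Sker (a x : ℝ) : ℝ :=
  Real.sign x * (si (a * |x|) * Real.cos (a * |x|) - ci (a * |x|) * Real.sin (a * |x|))

/-- The kernel `T_a(x) = si(a|x|) sin(a|x|) + ci(a|x|) cos(a|x|)`. -/
noncomputable def Tker (a x : ℝ) : ℝ :=
  si (a * |x|) * Real.sin (a * |x|) + ci (a * |x|) * Real.cos (a * |x|)

/-- Improper integrals of `P t / t ^ (n + 2)` converge absolutely for bounded `P`. -/
lemma integrableOn_Ioi_div_pow {P : ℝ → ℝ} (hP : Continuous P) (hP1 : ∀ t, |P t| ≤ 1)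
    (n : ℕ) {u : ℝ} (hu : 0 < u) :
    IntegrableOn (fun t => P t / t ^ (n + 2)) (Set.Ioi u) := by
  have hint : IntegrableOn (fun t : ℝ => t ^ (-((n : ℝ) + 2))) (Set.Ioi u) :=
    integrableOn_Ioi_rpow_of_lt (by have : (0 : ℝ) ≤ n := n.cast_nonneg; linarith) hu
  refine Integrable.mono' hint
    (hP.measurable.div (by fun_prop)).aestronglyMeasurable ?_
  filter_upwards [ae_restrict_mem measurableSet_Ioi] with t ht
  have ht0 : 0 < t := hu.trans ht
  rw [Real.rpow_neg ht0.le, show (n : ℝ) + 2 = ((n + 2 : ℕ) : ℝ) by push_cast; ring,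
    Real.rpow_natCast, norm_div, Real.norm_eq_abs, norm_pow, Real.norm_of_nonneg ht0.le,
    div_eq_mul_inv]
  exact mul_le_of_le_one_left (by positivity) (hP1 t)

lemma abs_integral_Ioi_div_pow_le {P : ℝ → ℝ} (hP1 : ∀ t, |P t| ≤ 1)
    (n : ℕ) {u : ℝ} (hu : 0 < u) :
    |∫ t in Set.Ioi u, P t / t ^ (n + 2)| ≤ 1 / ((n + 1) * u ^ (n + 1)) := by
  have hn : (0 : ℝ) ≤ n := n.cast_nonneg
  have hlt : -((n : ℝ) + 2) < -1 := by linarith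
  have hint : IntegrableOn (fun t : ℝ => t ^ (-((n : ℝ) + 2))) (Set.Ioi u) :=
    integrableOn_Ioi_rpow_of_lt hlt hu
  have hval : ∫ t in Set.Ioi u, t ^ (-((n : ℝ) + 2)) = 1 / ((n + 1) * u ^ (n + 1)) := by
    rw [integral_Ioi_rpow_of_lt hlt hu,
      show -((n : ℝ) + 2) + 1 = -((n + 1 : ℕ) : ℝ) by push_cast; ring,
      Real.rpow_neg hu.le, Real.rpow_natCast]
    push_cast
    field_simp
  rw [← hval, ← Real.norm_eq_abs]
  refine norm_integral_le_of_norm_le hint ?_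
  filter_upwards [ae_restrict_mem measurableSet_Ioi] with t ht
  have ht0 : 0 < t := hu.trans ht
  rw [Real.rpow_neg ht0.le, show (n : ℝ) + 2 = ((n + 2 : ℕ) : ℝ) by push_cast; ring,
    Real.rpow_natCast, norm_div, Real.norm_eq_abs, norm_pow, Real.norm_of_nonneg ht0.le,
    div_eq_mul_inv]
  exact mul_le_of_le_one_left (by positivity) (hP1 t)

lemma tendsto_div_pow_atTop_zero {P : ℝ → ℝ} (hP1 : ∀ t, |P t| ≤ 1) (n : ℕ) :
    Tendsto (fun t => P t / t ^ (n + 1)) atTop (𝓝 0) := by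
  have h : Tendsto (fun t : ℝ => (t ^ (n + 1))⁻¹) atTop (𝓝 0) :=
    (tendsto_pow_atTop n.succ_ne_zero).inv_tendsto_atTop
  refine squeeze_zero_norm' ?_ h
  filter_upwards [eventually_gt_atTop 0] with t ht
  rw [norm_div, Real.norm_eq_abs, norm_pow, Real.norm_of_nonneg ht.le, div_eq_mul_inv]
  exact mul_le_of_le_one_left (by positivity) (hP1 t)

lemma hasDerivAt_div_pow {P p : ℝ → ℝ} (hPp : ∀ t, HasDerivAt P (p t) t) (n : ℕ) {t : ℝ}
    (ht : 0 < t) :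
    HasDerivAt (fun t => P t / t ^ (n + 1))
      (p t / t ^ (n + 1) - (n + 1) * (P t / t ^ (n + 2))) t := by
  convert! (hPp t).div (hasDerivAt_pow (n + 1) t) (by positivity) using 1
  push_cast
  field_simp
  ring_nf

/-- Integration by parts for the conditionally convergent integral of `p t / t`. -/
lemma tendsto_integral_div {P p : ℝ → ℝ} (hPp : ∀ t, HasDerivAt P (p t) t)
    (hp : Continuous p) (hP1 : ∀ t, |P t| ≤ 1) {u : ℝ} (hu : 0 < u) :
    Tendsto (fun R => ∫ t in u..R, p t / t) atTop
      (𝓝 (-(P u / u) + ∫ t in Set.Ioi u, P t / t ^ 2)) := by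
  have hP : Continuous P := continuous_iff_continuousAt.2 fun t => (hPp t).continuousAt
  have hint := integrableOn_Ioi_div_pow hP hP1 0 hu
  have h1 := intervalIntegral_tendsto_integral_Ioi u hint tendsto_id
  have h2 := ((tendsto_div_pow_atTop_zero hP1 0).sub_const (P u / u)).add h1
  simp only [zero_sub, zero_add] at h2
  refine h2.congr' ?_
  filter_upwards [eventually_ge_atTop u] with R hR
  have hpos : ∀ t ∈ Set.uIcc u R, 0 < t := fun t ht => by
    rw [Set.uIcc_of_le hR] at ht
    exact hu.trans_le ht.1
  have i1 : IntervalIntegrable (fun t => p t / t) volume u R :=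
    (hp.continuousOn.div continuousOn_id fun t ht => (hpos t ht).ne').intervalIntegrable
  have i2 : IntervalIntegrable (fun t => P t / t ^ 2) volume u R :=
    (hP.continuousOn.div (by fun_prop)
      fun t ht => (pow_pos (hpos t ht) 2).ne').intervalIntegrable
  have := intervalIntegral.integral_eq_sub_of_hasDerivAt (f := fun t => P t / t)
    (f' := fun t => p t / t - P t / t ^ 2)
    (fun t ht => by simpa using hasDerivAt_div_pow hPp 0 (hpos t ht)) (i1.sub i2)
  rw [intervalIntegral.integral_sub i1 i2] at this
  simp only [id, pow_one]
  linarith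

lemma abs_integral_Ioi_div_sq_le {P p : ℝ → ℝ} (hPp : ∀ t, HasDerivAt P (p t) t)
    (hp : Continuous p) (hP1 : ∀ t, |P t| ≤ 1) (hp1 : ∀ t, |p t| ≤ 1) {u : ℝ} (hu : 0 < u) :
    |∫ t in Set.Ioi u, p t / t ^ 2| ≤ 2 / u ^ 2 := by
  have hP : Continuous P := continuous_iff_continuousAt.2 fun t => (hPp t).continuousAt
  have i1 := integrableOn_Ioi_div_pow hp hp1 0 hu
  have i2 := (integrableOn_Ioi_div_pow hP hP1 1 hu).const_mul 2
  have h := integral_Ioi_of_hasDerivAt_of_tendsto' (f := fun t => P t / t ^ 2)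
    (f' := fun t => p t / t ^ 2 - 2 * (P t / t ^ 3)) (a := u)
    (fun t ht => by
      convert! hasDerivAt_div_pow hPp 1 (hu.trans_le ht) using 2
      norm_num)
    (i1.sub i2) (tendsto_div_pow_atTop_zero hP1 1)
  have hsub := integral_sub i1 i2
  simp only [zero_add, Nat.reduceAdd] at hsub
  rw [hsub, integral_const_mul] at h
  have hb := abs_integral_Ioi_div_pow_le hP1 1 hu
  have hPu : |P u / u ^ 2| ≤ 1 / u ^ 2 := by
    rw [abs_div, abs_of_pos (pow_pos hu 2)]
    gcongr
    exact hP1 u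
  have e : (1 : ℝ) / (((1 : ℕ) + 1) * u ^ (1 + 1)) = (1 / u ^ 2) / 2 := by
    push_cast
    field_simp
    norm_num
  rw [e] at hb
  have e2 : 2 / u ^ 2 = 1 / u ^ 2 + 1 / u ^ 2 := by ring
  rw [e2]
  rw [abs_le] at *
  simp only [Nat.reduceAdd] at hb
  constructor <;> linarith

lemma hasDerivAt_neg_cos (t : ℝ) : HasDerivAt (fun t => -Real.cos t) (Real.sin t) t := by
  convert! (Real.hasDerivAt_cos t).neg using 1
  simp

lemma abs_neg_cos_le_one (t : ℝ) : |-Real.cos t| ≤ 1 := by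
  simpa using Real.abs_cos_le_one t

lemma si_eq {u : ℝ} (hu : 0 < u) :
    si u = -(Real.cos u / u) + ∫ t in Set.Ioi u, Real.cos t / t ^ 2 := by
  rw [si, (tendsto_integral_div hasDerivAt_neg_cos Real.continuous_sin
    abs_neg_cos_le_one hu).limUnder_eq]
  simp only [neg_div, integral_neg]
  ring

lemma ci_eq {u : ℝ} (hu : 0 < u) :
    ci u = Real.sin u / u - ∫ t in Set.Ioi u, Real.sin t / t ^ 2 := by
  rw [ci, (tendsto_integral_div Real.hasDerivAt_sin Real.continuous_cos
    Real.abs_sin_le_one hu).limUnder_eq]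
  ring

lemma limUnder_integral_div_eq {P p : ℝ → ℝ} (hPp : ∀ t, HasDerivAt P (p t) t)
    (hp : Continuous p) (hP1 : ∀ t, |P t| ≤ 1) {u : ℝ} (hu : 0 < u) :
    limUnder atTop (fun R => ∫ t in u..R, p t / t)
      = (∫ t in u..1, p t / t) + limUnder atTop (fun R => ∫ t in (1 : ℝ)..R, p t / t) := by
  have h1 := tendsto_integral_div hPp hp hP1 one_pos
  have hi : ∀ {v w : ℝ}, 0 < v → 0 < w →
      IntervalIntegrable (fun t => p t / t) volume v w := fun hv hw =>
    (hp.continuousOn.div continuousOn_id fun t ht =>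
      ((lt_min hv hw).trans_le ht.1).ne').intervalIntegrable
  rw [h1.limUnder_eq]
  refine Tendsto.limUnder_eq ((h1.const_add _).congr' ?_)
  filter_upwards [eventually_gt_atTop 0] with R hR
  exact intervalIntegral.integral_add_adjacent_intervals (hi hu one_pos) (hi one_pos hR)

lemma abs_si_le {u : ℝ} (hu : 0 < u) (hu1 : u ≤ 1) : |si u| ≤ |si 1| + 1 := by
  have h := limUnder_integral_div_eq hasDerivAt_neg_cos Real.continuous_sin
    abs_neg_cos_le_one hu
  have hb : ‖∫ t in u..1, Real.sin t / t‖ ≤ 1 * |1 - u| := by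
    refine intervalIntegral.norm_integral_le_of_norm_le_const fun t ht => ?_
    rw [norm_div]
    exact div_le_one_of_le₀ Real.abs_sin_le_abs (norm_nonneg _)
  have hle : |1 - u| ≤ 1 := by rw [abs_le]; constructor <;> linarith
  have e : si u = si 1 - ∫ t in u..1, Real.sin t / t := by
    rw [si, si, h]; ring
  rw [e]
  refine (abs_sub _ _).trans ?_
  rw [Real.norm_eq_abs] at hb
  linarith

lemma abs_ci_le {u : ℝ} (hu : 0 < u) (hu1 : u ≤ 1) : |ci u| ≤ |ci 1| + |Real.log u| := by
  have h := limUnder_integral_div_eq Real.hasDerivAt_sin Real.continuous_cos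
    Real.abs_sin_le_one hu
  have hb : ‖∫ t in u..1, Real.cos t / t‖ ≤ ∫ t in u..1, t⁻¹ := by
    refine intervalIntegral.norm_integral_le_of_norm_le hu1
      (ae_of_all _ fun t ht => ?_) ?_
    · have ht0 : 0 < t := hu.trans ht.1
      rw [norm_div, Real.norm_of_nonneg ht0.le, div_eq_mul_inv]
      exact mul_le_of_le_one_left (by positivity) (Real.abs_cos_le_one t)
    · exact intervalIntegral.intervalIntegrable_inv
        (fun t ht => ((lt_min hu one_pos).trans_le ht.1).ne') continuousOn_id
  rw [integral_inv_of_pos hu one_pos, one_div, Real.log_inv] at hb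
  have e : ci u = ci 1 - ∫ t in u..1, Real.cos t / t := by
    rw [ci, ci, h]; ring
  rw [e]
  refine (abs_sub _ _).trans ?_
  rw [Real.norm_eq_abs] at hb
  have := neg_le_abs (Real.log u)
  linarith

/-- The profile `u ↦ si u cos u - ci u sin u` of the kernel is `-1/u` up to an error
given by absolutely convergent integrals. -/
lemma mul_si_cos_sub_ci_sin {u : ℝ} (hu : 0 < u) :
    u * (si u * Real.cos u - ci u * Real.sin u) = -1 +
      u * ((∫ t in Set.Ioi u, Real.cos t / t ^ 2) * Real.cos u +
        (∫ t in Set.Ioi u, Real.sin t / t ^ 2) * Real.sin u) := by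
  rw [si_eq hu, ci_eq hu]
  have := Real.sin_sq_add_cos_sq u
  field_simp
  linear_combination -this

lemma abs_mul_add_mul_le {A B c s K : ℝ} (hA : |A| ≤ K) (hB : |B| ≤ K) (hc : |c| ≤ 1)
    (hs : |s| ≤ 1) : |A * c + B * s| ≤ K + K := by
  refine (abs_add_le _ _).trans (add_le_add ?_ ?_) <;> rw [abs_mul]
  · exact (mul_le_of_le_one_right (abs_nonneg _) hc).trans hA
  · exact (mul_le_of_le_one_right (abs_nonneg _) hs).trans hB

lemma abs_mul_si_cos_sub_ci_sin_le {u : ℝ} (hu : 0 < u) :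
    |u * (si u * Real.cos u - ci u * Real.sin u)| ≤ 3 := by
  rw [mul_si_cos_sub_ci_sin hu]
  have hA := abs_integral_Ioi_div_pow_le Real.abs_cos_le_one 0 hu
  have hB := abs_integral_Ioi_div_pow_le Real.abs_sin_le_one 0 hu
  have h := abs_mul_add_mul_le hA hB (Real.abs_cos_le_one u) (Real.abs_sin_le_one u)
  simp only [CharP.cast_eq_zero, zero_add, one_mul, pow_one] at h
  refine (abs_add_le _ _).trans ?_
  rw [abs_mul, abs_of_pos hu]
  have := mul_le_mul_of_nonneg_left h hu.le
  have e : u * (1 / u + 1 / u) = 2 := by field_simp; norm_num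
  rw [e] at this
  norm_num
  linarith

lemma tendsto_mul_si_cos_sub_ci_sin :
    Tendsto (fun u => u * (si u * Real.cos u - ci u * Real.sin u)) atTop (𝓝 (-1)) := by
  rw [tendsto_iff_norm_sub_tendsto_zero]
  have h4 : Tendsto (fun u : ℝ => 4 * u⁻¹) atTop (𝓝 0) := by
    simpa using tendsto_inv_atTop_zero.const_mul (4 : ℝ)
  refine squeeze_zero' (Eventually.of_forall fun _ => norm_nonneg _) ?_ h4
  filter_upwards [eventually_gt_atTop 0] with u hu
  rw [mul_si_cos_sub_ci_sin hu]
  have hA := abs_integral_Ioi_div_sq_le Real.hasDerivAt_sin Real.continuous_cos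
    Real.abs_sin_le_one Real.abs_cos_le_one hu
  have hB := abs_integral_Ioi_div_sq_le hasDerivAt_neg_cos Real.continuous_sin
    abs_neg_cos_le_one Real.abs_sin_le_one hu
  have h := abs_mul_add_mul_le hA hB (Real.abs_cos_le_one u) (Real.abs_sin_le_one u)
  rw [add_sub_cancel_left, norm_mul, Real.norm_of_nonneg hu.le, Real.norm_eq_abs]
  refine (mul_le_mul_of_nonneg_left h hu.le).trans_eq ?_
  field_simp
  norm_num

lemma exists_abs_si_cos_sub_ci_sin_le :
    ∃ C : ℝ, ∀ u : ℝ, 0 < u → |si u * Real.cos u - ci u * Real.sin u| ≤ C := by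
  refine ⟨|si 1| + 1 + (|ci 1| + 1) + 3, fun u hu => ?_⟩
  rcases le_total u 1 with hu1 | hu1
  · have h1 : |si u * Real.cos u| ≤ |si 1| + 1 := by
      rw [abs_mul]
      exact (mul_le_of_le_one_right (abs_nonneg _) (Real.abs_cos_le_one u)).trans
        (abs_si_le hu hu1)
    have hlog := (Real.abs_log_mul_self_lt u hu hu1).le
    have h2 : |ci u * Real.sin u| ≤ |ci 1| + 1 := by
      rw [abs_mul]
      calc |ci u| * |Real.sin u| ≤ (|ci 1| + |Real.log u|) * u := by
            refine mul_le_mul (abs_ci_le hu hu1) ?_ (abs_nonneg _) (by positivity)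
            exact Real.abs_sin_le_abs.trans_eq (abs_of_pos hu)
        _ ≤ |ci 1| + 1 := by
            rw [add_mul]
            refine add_le_add (mul_le_of_le_one_right (abs_nonneg _) hu1) ?_
            rwa [abs_mul, abs_of_pos hu] at hlog
    have := abs_sub (si u * Real.cos u) (ci u * Real.sin u)
    linarith
  · have h := abs_mul_si_cos_sub_ci_sin_le hu
    rw [abs_mul, abs_of_pos hu] at h
    have := le_mul_of_one_le_left
      (abs_nonneg (si u * Real.cos u - ci u * Real.sin u)) hu1
    have := abs_nonneg (si 1)
    have := abs_nonneg (ci 1)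
    linarith

lemma measurable_integral_Ioi {g : ℝ → ℝ} (hg : Measurable g) :
    Measurable fun u => ∫ t in Set.Ioi u, g t := by
  have h : StronglyMeasurable fun z : ℝ × ℝ =>
      {z : ℝ × ℝ | z.1 < z.2}.indicator (fun z => g z.2) z :=
    ((hg.comp measurable_snd).indicator
      (measurableSet_lt measurable_fst measurable_snd)).stronglyMeasurable
  convert! (h.integral_prod_right' (ν := volume)).measurable using 2 with u
  rw [← integral_indicator measurableSet_Ioi]
  rfl

lemma measurable_Sker {a : ℝ} (ha : 0 < a) : Measurable (Sker a) := by
  have hs : Measurable Real.sign := by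
    unfold Real.sign
    exact Measurable.ite measurableSet_Iio measurable_const
      (Measurable.ite measurableSet_Ioi measurable_const measurable_const)
  have hc : Measurable fun u => ∫ t in Set.Ioi u, Real.cos t / t ^ 2 :=
    measurable_integral_Ioi (by fun_prop)
  have hsn : Measurable fun u => ∫ t in Set.Ioi u, Real.sin t / t ^ 2 :=
    measurable_integral_Ioi (by fun_prop)
  have h1 : Measurable fun u =>
      (-(Real.cos u / u) + ∫ t in Set.Ioi u, Real.cos t / t ^ 2) * Real.cos u -
        (Real.sin u / u - ∫ t in Set.Ioi u, Real.sin t / t ^ 2) * Real.sin u := by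
    fun_prop
  have habs : Measurable fun y : ℝ => a * |y| := by fun_prop
  convert! hs.mul (h1.comp habs) using 1
  ext y
  rcases eq_or_ne y 0 with rfl | hy
  · simp [Sker]
  · have hu : 0 < a * |y| := by positivity
    simp [Sker, si_eq hu, ci_eq hu]

lemma Sker_neg (a y : ℝ) : Sker a (-y) = -Sker a y := by
  simp [Sker, Real.sign_neg]

lemma exists_abs_Sker_le : ∃ C : ℝ, ∀ a : ℝ, 0 < a → ∀ y, |Sker a y| ≤ C := by
  obtain ⟨C, hC⟩ := exists_abs_si_cos_sub_ci_sin_le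
  refine ⟨C, fun a ha y => ?_⟩
  rcases eq_or_ne y 0 with rfl | hy
  · simpa [Sker] using (abs_nonneg _).trans (hC 1 one_pos)
  · have hu : 0 < a * |y| := by positivity
    have hs : |Real.sign y| = 1 := by
      rcases Real.sign_apply_eq_of_ne_zero y hy with h | h <;> simp [h]
    rw [Sker, abs_mul, hs, one_mul]
    exact hC _ hu

lemma mul_Sker (a y : ℝ) : a * y * Sker a y = (a * |y|) *
    (si (a * |y|) * Real.cos (a * |y|) - ci (a * |y|) * Real.sin (a * |y|)) := by
  have : y * Real.sign y = |y| := by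
    rcases lt_trichotomy y 0 with h | rfl | h
    · simp [Real.sign_of_neg h, abs_of_neg h]
    · simp
    · simp [Real.sign_of_pos h, abs_of_pos h]
  rw [Sker, ← this]
  ring

/-- Convolution with an odd kernel only sees the odd part of the function about the point. -/
lemma integral_odd_kernel_mul {k phi : ℝ → ℝ} (hk : Measurable k) {C : ℝ}
    (hC : ∀ y, |k y| ≤ C) (hodd : ∀ y, k (-y) = -k y) (hphi : Integrable phi) (x : ℝ) :
    ∫ t, k (x - t) * phi t = 1 / 2 * ∫ y, k y * (phi (x - y) - phi (x + y)) := by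
  have i1 : Integrable fun y => k y * phi (x - y) :=
    (hphi.comp_sub_left x).bdd_mul hk.aestronglyMeasurable (ae_of_all _ hC)
  have i2 : Integrable fun y => k y * phi (x + y) :=
    (hphi.comp_add_left x).bdd_mul hk.aestronglyMeasurable (ae_of_all _ hC)
  have e1 : ∫ t, k (x - t) * phi t = ∫ y, k y * phi (x - y) := by
    rw [← integral_sub_left_eq_self (fun y => k y * phi (x - y)) volume x]
    simp
  have e2 : ∫ y, k y * phi (x + y) = -∫ y, k y * phi (x - y) := by
    rw [← integral_neg_eq_self, ← integral_neg]
    simp [hodd, sub_eq_add_neg]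
  simp only [mul_sub]
  rw [integral_sub i1 i2, e1, e2]
  ring

lemma integrableOn_Icc_abs_rpow {r : ℝ} (hr : -1 < r) {R : ℝ} (hR : 0 ≤ R) :
    IntegrableOn (fun y : ℝ => |y| ^ r) (Set.Icc (-R) R) := by
  rw [← intervalIntegrable_iff_integrableOn_Icc_of_le (by linarith)]
  refine intervalIntegrable_of_even (by simp) fun z hz => ?_
  refine (intervalIntegral.intervalIntegrable_rpow' hr).congr fun y hy => ?_
  rw [Set.uIoc_of_le hz.le] at hy
  simp [abs_of_pos hy.1]

/-- The symmetrised Cauchy integrand of a Hölder function is absolutely integrable. -/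
lemma integrable_sub_div {lam M : ℝ} (hlam0 : 0 < lam) {phi : ℝ → ℝ}
    (hcont : Continuous phi) (hsupp : HasCompactSupport phi)
    (hHolder : ∀ x y : ℝ, |phi x - phi y| ≤ M * |x - y| ^ lam) (x : ℝ) :
    Integrable fun y => (phi (x - y) - phi (x + y)) / y := by
  obtain ⟨R, hR⟩ := hsupp.isCompact.isBounded.subset_closedBall x
  have hz : ∀ z, max R 0 < |z - x| → phi z = 0 := fun z hzR => by
    by_contra hne
    have := hR (subset_tsupport _ hne)
    rw [Metric.mem_closedBall, Real.dist_eq] at this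
    exact (lt_of_le_of_lt (le_max_left R 0) hzR).not_ge this
  have hM : IntegrableOn (fun y : ℝ => M * 2 ^ lam * |y| ^ (lam - 1))
      (Set.Icc (-max R 0) (max R 0)) :=
    (integrableOn_Icc_abs_rpow (by linarith) (le_max_right R 0)).const_mul _
  rw [← integrable_indicator_iff measurableSet_Icc] at hM
  have hmeas : Measurable phi := hcont.measurable
  refine hM.mono' (Measurable.aestronglyMeasurable (by fun_prop)) (ae_of_all _ fun y => ?_)
  by_cases hy : y ∈ Set.Icc (-max R 0) (max R 0)
  · rw [Set.indicator_of_mem hy]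
    rcases eq_or_ne y 0 with rfl | hy0
    · have hM0 := (abs_nonneg _).trans (hHolder 1 0)
      simp only [sub_zero, abs_one, Real.one_rpow, mul_one] at hM0
      simp only [sub_zero, add_zero, sub_self, div_zero, norm_zero]
      positivity
    · have hpos : 0 < |y| := abs_pos.2 hy0
      rw [norm_div, Real.norm_eq_abs, Real.norm_eq_abs, Real.rpow_sub_one hpos.ne',
        ← mul_div_assoc]
      gcongr
      refine (hHolder _ _).trans_eq ?_
      rw [show x - y - (x + y) = -(2 * y) by ring, abs_neg, abs_mul, abs_two,
        Real.mul_rpow zero_le_two hpos.le, mul_assoc]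
  · rw [Set.indicator_of_notMem hy]
    have hy' : max R 0 < |y| := by
      rw [Set.mem_Icc, ← abs_le] at hy
      exact not_le.1 hy
    rw [hz (x - y) (by simpa using hy'), hz (x + y) (by simpa using hy')]
    simp

/-- As `a → ∞`, the operator `(a/π)·(S_a ∗ ·)` applied to a compactly
supported Hölder function tends pointwise to minus the Cauchy principal value. -/
theorem stmt0 (lam : ℝ) (hlam0 : 0 < lam) (hlam1 : lam < 1)
    (phi : ℝ → ℝ) (hsupp : HasCompactSupport phi) (M : ℝ) (hM : 0 < M)
    (hHolder : ∀ x y : ℝ, |phi x - phi y| ≤ M * |x - y| ^ lam) (x : ℝ) :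
    ∃ L : ℝ,
      Tendsto (fun ε : ℝ => ∫ t in {t : ℝ | ε < |t - x|}, phi t / (x - t))
        (nhdsWithin 0 (Set.Ioi 0)) (nhds L) ∧
      Tendsto (fun a : ℝ => (a / Real.pi) * ∫ t : ℝ, Sker a (x - t) * phi t)
        atTop (nhds (-(1 / Real.pi) * L)) := by
  have hcont : Continuous phi := by
    rw [continuous_iff_continuousAt]
    intro z
    rw [ContinuousAt, tendsto_iff_norm_sub_tendsto_zero]
    have h : Tendsto (fun y : ℝ => M * |y - z| ^ lam) (𝓝 z) (𝓝 0) := by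
      have : Continuous fun y : ℝ => M * |y - z| ^ lam :=
        continuous_const.mul ((by fun_prop : Continuous fun y : ℝ => |y - z|).rpow_const
          fun _ => Or.inr hlam0.le)
      simpa [Real.zero_rpow hlam0.ne'] using this.tendsto z
    exact squeeze_zero (fun _ => norm_nonneg _) (fun y => hHolder y z) h
  have hphi : Integrable phi := hcont.integrable_of_hasCompactSupport hsupp
  have hD := integrable_sub_div hlam0 hcont hsupp hHolder x
  have hne : ∀ᵐ y : ℝ, y ≠ 0 := by simp [ae_iff]
  refine ⟨1 / 2 * ∫ y, (phi (x - y) - phi (x + y)) / y, ?_, ?_⟩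
  · set k : ℝ → ℝ → ℝ := fun ε => {y : ℝ | ε < |y|}.indicator fun y => y⁻¹ with hk
    have hset : ∀ ε : ℝ, MeasurableSet {y : ℝ | ε < |y|} := fun ε =>
      measurableSet_lt measurable_const (by fun_prop)
    have key : ∀ ε : ℝ, 0 < ε → ∫ t in {t : ℝ | ε < |t - x|}, phi t / (x - t) =
        1 / 2 * ∫ y, {y : ℝ | ε < |y|}.indicator 1 y *
          ((phi (x - y) - phi (x + y)) / y) := by
      intro ε hε
      rw [← integral_indicator (measurableSet_lt measurable_const (by fun_prop))]
      have hkm : Measurable (k ε) := measurable_inv.indicator (hset ε)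
      have hkb : ∀ y, |k ε y| ≤ ε⁻¹ := fun y => by
        by_cases hy : ε < |y|
        · rw [hk]
          simp only [Set.indicator, Set.mem_ofPred_eq, hy, if_true, abs_inv]
          gcongr
        · simp [hk, hy, hε.le]
      have hko : ∀ y, k ε (-y) = -k ε y := fun y => by
        by_cases hy : ε < |y| <;> simp [hk, hy, inv_neg]
      have h := integral_odd_kernel_mul hkm hkb hko hphi x
      convert! h using 1
      · congr 1
        ext t
        by_cases ht : ε < |t - x|
        · have ht' : ε < |x - t| := by rwa [abs_sub_comm]
          simp [hk, Set.indicator, ht, ht', div_eq_inv_mul]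
        · have ht' : ¬ ε < |x - t| := by rwa [abs_sub_comm]
          simp [hk, Set.indicator, ht, ht']
      · congr 2
        ext y
        by_cases hy : ε < |y| <;> simp [hk, Set.indicator, hy, div_eq_inv_mul]
    have hlim : Tendsto (fun ε : ℝ => ∫ y, {y : ℝ | ε < |y|}.indicator 1 y *
          ((phi (x - y) - phi (x + y)) / y)) (𝓝[>] 0)
        (𝓝 (∫ y, (phi (x - y) - phi (x + y)) / y)) := by
      refine tendsto_integral_filter_of_dominated_convergence _
        (Eventually.of_forall fun ε => ?_) (Eventually.of_forall fun ε => ae_of_all _ fun y => ?_)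
        hD.norm ?_
      · exact ((measurable_one.indicator (hset ε)).aestronglyMeasurable).mul
          hD.aestronglyMeasurable
      · rw [norm_mul]
        refine mul_le_of_le_one_left (norm_nonneg _) ?_
        by_cases hy : ε < |y| <;> simp [Set.indicator, hy]
      · filter_upwards [hne] with y hy
        refine tendsto_const_nhds.congr' ?_
        filter_upwards [nhdsWithin_le_nhds (Iio_mem_nhds (abs_pos.2 hy))] with ε hε
        have hε' : ε < |y| := hε
        simp [Set.indicator, hε']
    refine (hlim.const_mul (1 / 2)).congr' ?_
    filter_upwards [self_mem_nhdsWithin] with ε hε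
    exact (key ε hε).symm
  · obtain ⟨C, hC⟩ := exists_abs_Sker_le
    have hlim : Tendsto (fun a : ℝ => ∫ y, a * y * Sker a y *
          ((phi (x - y) - phi (x + y)) / y)) atTop
        (𝓝 (∫ y, -1 * ((phi (x - y) - phi (x + y)) / y))) := by
      refine tendsto_integral_filter_of_dominated_convergence
        (fun y => 3 * ‖(phi (x - y) - phi (x + y)) / y‖) ?_ ?_ (hD.norm.const_mul 3) ?_
      · filter_upwards [eventually_gt_atTop 0] with a ha
        exact (((by fun_prop : Measurable fun y : ℝ => a * y).mul
          (measurable_Sker ha)).aestronglyMeasurable).mul hD.aestronglyMeasurable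
      · filter_upwards [eventually_gt_atTop 0] with a ha
        filter_upwards [hne] with y hy
        rw [norm_mul]
        gcongr
        rw [mul_Sker]
        exact abs_mul_si_cos_sub_ci_sin_le (by positivity)
      · filter_upwards [hne] with y hy
        refine Tendsto.mul_const _ ?_
        simp only [mul_Sker]
        exact tendsto_mul_si_cos_sub_ci_sin.comp
          (tendsto_id.atTop_mul_const (abs_pos.2 hy))
    have h := (hlim.const_mul (1 / Real.pi * (1 / 2)))
    rw [integral_const_mul, show ∀ I : ℝ, 1 / Real.pi * (1 / 2) * (-1 * I) =
      -(1 / Real.pi) * (1 / 2 * I) by intro I; ring] at h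
    refine h.congr' ?_
    filter_upwards [eventually_gt_atTop 0] with a ha
    rw [integral_odd_kernel_mul (measurable_Sker ha) (hC a ha) (Sker_neg a) hphi x]
    have e : ∫ y, a * y * Sker a y * ((phi (x - y) - phi (x + y)) / y) =
        a * ∫ y, Sker a y * (phi (x - y) - phi (x + y)) := by
      rw [← integral_const_mul]
      refine integral_congr_ae ?_
      filter_upwards [hne] with y hy
      field_simp
    rw [e]
    ring
end

section
/- Let 0 < λ < 1 and let φ : ℝ → ℝ be compactly supported and Hölder continuous with exponent λ (there is M > 0 with |φ(x) − φ(y)| ≤ M·|x − y|^λ for all x, y). Then for every x ∈ ℝ, the limit as a → +∞ of −(a/π)·∫_{−∞}^{∞} T_a(x − t)·φ(t) dt exists and equals φ(x). (In other words, as a → ∞ the kernel of −(a/π)·(T_a ∗ ·) reduces to the Dirac delta.) -/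
open Filter MeasureTheory Topology

/-- The Laplace transform `∫_0^∞ h(u) e^{-yu} du` of `h`. -/
noncomputable def laplaceIoi (h : ℝ → ℝ) (y : ℝ) : ℝ :=
  ∫ u in Set.Ioi (0 : ℝ), h u * Real.exp (-y * u)

/-- The auxiliary function `f(y) = ∫_0^∞ e^{-yu} / (1 + u²) du` of the sine and cosine
integrals. -/
noncomputable def siAuxF : ℝ → ℝ := laplaceIoi fun u => (1 + u ^ 2)⁻¹

/-- The auxiliary function `g(y) = ∫_0^∞ u e^{-yu} / (1 + u²) du` of the sine and cosine
integrals. -/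
noncomputable def siAuxG : ℝ → ℝ := laplaceIoi fun u => u * (1 + u ^ 2)⁻¹

lemma integral_exp_neg_mul_Ioi_zero {y : ℝ} (hy : 0 < y) :
    ∫ u in Set.Ioi (0 : ℝ), Real.exp (-y * u) = y⁻¹ := by
  rw [integral_exp_mul_Ioi (by linarith)]
  simp [neg_div_neg_eq]

lemma integrableOn_laplace {h : ℝ → ℝ} (hm : Measurable h) (hb : ∀ u, |h u| ≤ 1)
    {y : ℝ} (hy : 0 < y) :
    IntegrableOn (fun u => h u * Real.exp (-y * u)) (Set.Ioi 0) := by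
  refine (exp_neg_integrableOn_Ioi 0 hy).mono' (by fun_prop) (.of_forall fun u => ?_)
  rw [Real.norm_eq_abs, abs_mul, Real.abs_exp]
  exact mul_le_of_le_one_left (Real.exp_pos _).le (hb u)

lemma hasDerivAt_laplaceIoi {h : ℝ → ℝ} (hm : Measurable h) (hb : ∀ u, |h u| ≤ 1)
    (hb' : ∀ u, |u * h u| ≤ 1) {y : ℝ} (hy : 0 < y) :
    HasDerivAt (laplaceIoi h) (-laplaceIoi (fun u => u * h u) y) y := by
  have key := hasDerivAt_integral_of_dominated_loc_of_deriv_le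
    (μ := volume.restrict (Set.Ioi (0 : ℝ))) (x₀ := y) (s := Set.Ioi (y / 2))
    (F := fun y u => h u * Real.exp (-y * u))
    (F' := fun y u => -(u * h u * Real.exp (-y * u)))
    (bound := fun u => Real.exp (-(y / 2) * u))
    (Ioi_mem_nhds (by linarith)) (.of_forall fun z => by fun_prop)
    (integrableOn_laplace hm hb hy) (by fun_prop) ?_
    (exp_neg_integrableOn_Ioi 0 (by positivity)) ?_
  · exact key.2.congr_deriv (by rw [integral_neg, laplaceIoi])
  · filter_upwards [ae_restrict_mem measurableSet_Ioi] with u hu z hz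
    rw [norm_neg, Real.norm_eq_abs, abs_mul, Real.abs_exp]
    refine (mul_le_of_le_one_left (Real.exp_pos _).le (hb' u)).trans (Real.exp_le_exp.2 ?_)
    have : y / 2 * u ≤ z * u := mul_le_mul_of_nonneg_right (le_of_lt hz) (le_of_lt hu)
    linarith
  · refine .of_forall fun u z _ => ?_
    have : HasDerivAt (fun z : ℝ => -z * u) (-u) z := by
      simpa using ((hasDerivAt_id z).neg).mul_const u
    exact (this.exp.const_mul (h u)).congr_deriv (by ring)

lemma abs_laplaceIoi_le {h : ℝ → ℝ} (hb : ∀ u, |h u| ≤ 1)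
    {y : ℝ} (hy : 0 < y) : |laplaceIoi h y| ≤ y⁻¹ := by
  rw [← integral_exp_neg_mul_Ioi_zero hy, ← Real.norm_eq_abs]
  refine norm_integral_le_of_norm_le (exp_neg_integrableOn_Ioi 0 hy) (.of_forall fun u => ?_)
  rw [Real.norm_eq_abs, abs_mul, Real.abs_exp]
  exact mul_le_of_le_one_left (Real.exp_pos _).le (hb u)

lemma tendsto_laplaceIoi_atTop {h : ℝ → ℝ} (hb : ∀ u, |h u| ≤ 1) :
    Tendsto (laplaceIoi h) atTop (𝓝 0) := by
  refine squeeze_zero_norm' ?_ tendsto_inv_atTop_zero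
  filter_upwards [eventually_gt_atTop 0] with y hy using abs_laplaceIoi_le hb hy

lemma abs_inv_one_add_sq_le_one (u : ℝ) : |(1 + u ^ 2)⁻¹| ≤ 1 := by
  rw [abs_of_nonneg (by positivity)]
  exact inv_le_one_of_one_le₀ (by nlinarith)

lemma abs_mul_inv_one_add_sq_le_one (u : ℝ) : |u * (1 + u ^ 2)⁻¹| ≤ 1 := by
  rw [← div_eq_mul_inv, abs_div, abs_of_pos (by positivity : 0 < 1 + u ^ 2),
    div_le_one (by positivity)]
  nlinarith [sq_nonneg (|u| - 1), sq_abs u]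

lemma abs_mul_mul_inv_one_add_sq_le_one (u : ℝ) : |u * (u * (1 + u ^ 2)⁻¹)| ≤ 1 := by
  have : u * (u * (1 + u ^ 2)⁻¹) = u ^ 2 / (1 + u ^ 2) := by ring
  rw [this, abs_of_nonneg (by positivity), div_le_one (by positivity)]
  linarith

lemma hasDerivAt_siAuxF {y : ℝ} (hy : 0 < y) : HasDerivAt siAuxF (-siAuxG y) y :=
  hasDerivAt_laplaceIoi (by fun_prop) abs_inv_one_add_sq_le_one abs_mul_inv_one_add_sq_le_one hy

lemma hasDerivAt_siAuxG {y : ℝ} (hy : 0 < y) : HasDerivAt siAuxG (siAuxF y - y⁻¹) y := by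
  refine (hasDerivAt_laplaceIoi (h := fun u => u * (1 + u ^ 2)⁻¹) (by fun_prop)
    abs_mul_inv_one_add_sq_le_one abs_mul_mul_inv_one_add_sq_le_one hy).congr_deriv ?_
  rw [← integral_exp_neg_mul_Ioi_zero hy, siAuxF, laplaceIoi, laplaceIoi, ← integral_sub
    (integrableOn_laplace (by fun_prop) abs_inv_one_add_sq_le_one hy)
    (exp_neg_integrableOn_Ioi 0 hy), ← integral_neg]
  congr 1 with u
  field_simp
  ring

lemma tendsto_siAuxF_atTop : Tendsto siAuxF atTop (𝓝 0) :=
  tendsto_laplaceIoi_atTop abs_inv_one_add_sq_le_one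

lemma tendsto_siAuxG_atTop : Tendsto siAuxG atTop (𝓝 0) :=
  tendsto_laplaceIoi_atTop abs_mul_inv_one_add_sq_le_one

lemma siAuxG_nonneg (y : ℝ) : 0 ≤ siAuxG y :=
  setIntegral_nonneg measurableSet_Ioi fun u (hu : 0 < u) => by positivity

lemma siAuxG_le {y : ℝ} (hy : 0 < y) : siAuxG y ≤ 4 * y⁻¹ ^ 2 := by
  have hb : 4 * y⁻¹ ^ 2 = ∫ u in Set.Ioi (0 : ℝ), 2 * y⁻¹ * Real.exp (-(y / 2) * u) := by
    rw [integral_const_mul, integral_exp_neg_mul_Ioi_zero (by positivity)]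
    field_simp
    norm_num
  rw [hb]
  refine setIntegral_mono_on
    (integrableOn_laplace (by fun_prop) abs_mul_inv_one_add_sq_le_one hy)
    ((exp_neg_integrableOn_Ioi 0 (by positivity)).const_mul _) measurableSet_Ioi
    fun u (hu : 0 < u) => ?_
  have h1 : u * (1 + u ^ 2)⁻¹ ≤ u :=
    mul_le_of_le_one_right hu.le (inv_le_one_of_one_le₀ (by nlinarith))
  have h2 : u ≤ 2 * y⁻¹ * Real.exp (y / 2 * u) := by
    have := Real.add_one_le_exp (y / 2 * u)
    rw [mul_assoc, mul_comm y⁻¹, ← div_eq_mul_inv, ← mul_div_assoc, le_div_iff₀ hy]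
    linarith
  calc u * (1 + u ^ 2)⁻¹ * Real.exp (-y * u)
      ≤ 2 * y⁻¹ * Real.exp (y / 2 * u) * Real.exp (-y * u) := 
        mul_le_mul_of_nonneg_right (h1.trans h2) (Real.exp_pos _).le
    _ = 2 * y⁻¹ * Real.exp (-(y / 2) * u) := by
      rw [mul_assoc, ← Real.exp_add]
      ring_nf

lemma si_eq_s1 {y : ℝ} (hy : 0 < y) :
    si y = -(siAuxF y * Real.cos y + siAuxG y * Real.sin y) := by
  have hd : ∀ t, 0 < t → HasDerivAt (fun t => -(siAuxF t * Real.cos t + siAuxG t * Real.sin t))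
      (Real.sin t / t) t := fun t ht => by
    exact (((hasDerivAt_siAuxF ht).mul (Real.hasDerivAt_cos t)).add
      ((hasDerivAt_siAuxG ht).mul (Real.hasDerivAt_sin t))).neg.congr_deriv (by ring)
  have hlim : Tendsto (fun t => -(siAuxF t * Real.cos t + siAuxG t * Real.sin t)) atTop (𝓝 0) := by
    have h1 := tendsto_siAuxF_atTop.zero_mul_isBoundedUnder_le (g := Real.cos)
      (isBoundedUnder_of ⟨1, fun t => Real.abs_cos_le_one t⟩)
    have h2 := tendsto_siAuxG_atTop.zero_mul_isBoundedUnder_le (g := Real.sin)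
      (isBoundedUnder_of ⟨1, fun t => Real.abs_sin_le_one t⟩)
    simpa using (h1.add h2).neg
  have hint : Tendsto (fun R : ℝ => ∫ t in y..R, Real.sin t / t) atTop
      (𝓝 (siAuxF y * Real.cos y + siAuxG y * Real.sin y)) := by
    have h := hlim.sub_const (-(siAuxF y * Real.cos y + siAuxG y * Real.sin y))
    rw [zero_sub, neg_neg] at h
    refine h.congr' ?_
    filter_upwards [eventually_gt_atTop y] with R hR
    have hpos : ∀ t ∈ Set.uIcc y R, 0 < t := fun t ht => by
      rw [Set.uIcc_of_le hR.le] at ht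
      exact hy.trans_le ht.1
    refine (intervalIntegral.integral_eq_sub_of_hasDerivAt (fun t ht => hd t (hpos t ht)) ?_).symm
    exact (Real.continuous_sin.continuousOn.div continuousOn_id
      fun t ht => (hpos t ht).ne').intervalIntegrable
  rw [si, hint.limUnder_eq]

lemma ci_eq_s1 {y : ℝ} (hy : 0 < y) :
    ci y = siAuxF y * Real.sin y - siAuxG y * Real.cos y := by
  have hd : ∀ t, 0 < t → HasDerivAt (fun t => siAuxF t * Real.sin t - siAuxG t * Real.cos t)
      (Real.cos t / t) t := fun t ht => by
    exact (((hasDerivAt_siAuxF ht).mul (Real.hasDerivAt_sin t)).sub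
      ((hasDerivAt_siAuxG ht).mul (Real.hasDerivAt_cos t))).congr_deriv (by ring)
  have hlim : Tendsto (fun t => siAuxF t * Real.sin t - siAuxG t * Real.cos t) atTop (𝓝 0) := by
    have h1 := tendsto_siAuxF_atTop.zero_mul_isBoundedUnder_le (g := Real.sin)
      (isBoundedUnder_of ⟨1, fun t => Real.abs_sin_le_one t⟩)
    have h2 := tendsto_siAuxG_atTop.zero_mul_isBoundedUnder_le (g := Real.cos)
      (isBoundedUnder_of ⟨1, fun t => Real.abs_cos_le_one t⟩)
    simpa using h1.sub h2
  have hint : Tendsto (fun R : ℝ => ∫ t in y..R, Real.cos t / t) atTop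
      (𝓝 (-(siAuxF y * Real.sin y - siAuxG y * Real.cos y))) := by
    have h := hlim.sub_const (siAuxF y * Real.sin y - siAuxG y * Real.cos y)
    rw [zero_sub] at h
    refine h.congr' ?_
    filter_upwards [eventually_gt_atTop y] with R hR
    have hpos : ∀ t ∈ Set.uIcc y R, 0 < t := fun t ht => by
      rw [Set.uIcc_of_le hR.le] at ht
      exact hy.trans_le ht.1
    refine (intervalIntegral.integral_eq_sub_of_hasDerivAt (fun t ht => hd t (hpos t ht)) ?_).symm
    exact (Real.continuous_cos.continuousOn.div continuousOn_id
      fun t ht => (hpos t ht).ne').intervalIntegrable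
  rw [ci, hint.limUnder_eq, neg_neg]

lemma Tker_eq_neg_siAuxG {a x : ℝ} (ha : 0 < a) (hx : x ≠ 0) :
    Tker a x = -siAuxG (a * |x|) := by
  have hy : 0 < a * |x| := by positivity
  rw [Tker, si_eq_s1 hy, ci_eq_s1 hy]
  linear_combination (-siAuxG (a * |x|)) * Real.sin_sq_add_cos_sq (a * |x|)

lemma integral_siAuxG_Ioi : ∫ y in Set.Ioi (0 : ℝ), siAuxG y = Real.pi / 2 := by
  have hcont : ContinuousWithinAt siAuxF (Set.Ici 0) 0 := by
    refine continuousWithinAt_of_dominated (bound := fun u => (1 + u ^ 2)⁻¹)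
      (.of_forall fun y => by fun_prop) ?_ integrable_inv_one_add_sq.integrableOn
      (.of_forall fun u => by fun_prop)
    filter_upwards [self_mem_nhdsWithin] with y (hy : 0 ≤ y)
    filter_upwards [ae_restrict_mem measurableSet_Ioi] with u (hu : 0 < u)
    rw [Real.norm_eq_abs, abs_of_nonneg (by positivity)]
    refine mul_le_of_le_one_right (by positivity) (Real.exp_le_one_iff.2 ?_)
    have := mul_nonneg hy hu.le
    linarith
  have h0 : siAuxF 0 = Real.pi / 2 := by
    simp [siAuxF, laplaceIoi, integral_Ioi_inv_one_add_sq]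
  have h := integral_Ioi_of_hasDerivAt_of_nonpos hcont (fun y hy => hasDerivAt_siAuxF hy)
    (fun y _ => neg_nonpos.2 (siAuxG_nonneg y)) tendsto_siAuxF_atTop
  rw [integral_neg, h0] at h
  linarith

/-- As `a → ∞`, the operator `-(a/π)·(T_a ∗ ·)` applied to a compactly
supported Hölder function tends pointwise to the identity (Dirac delta kernel). -/
theorem stmt1 (lam : ℝ) (hlam0 : 0 < lam) (hlam1 : lam < 1)
    (phi : ℝ → ℝ) (hsupp : HasCompactSupport phi) (M : ℝ) (hM : 0 < M)
    (hHolder : ∀ x y : ℝ, |phi x - phi y| ≤ M * |x - y| ^ lam) (x : ℝ) :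
    Tendsto (fun a : ℝ => -(a / Real.pi) * ∫ t : ℝ, Tker a (x - t) * phi t)
      atTop (nhds (phi x)) := by
  have hcont : Continuous phi := by
    refine continuous_iff_continuousAt.2 fun y => tendsto_iff_dist_tendsto_zero.2 ?_
    have hbound : ContinuousAt (fun z : ℝ => M * |z - y| ^ lam) y := by
      fun_prop (disch := simp [hlam0.le])
    refine squeeze_zero (fun _ => dist_nonneg) (fun z => hHolder z y) ?_
    simpa [ContinuousAt, hlam0.ne'] using hbound
  have hdecay : Tendsto (fun y : ℝ => ‖y‖ ^ Module.finrank ℝ ℝ * (Real.pi⁻¹ * siAuxG |y|))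
      (Bornology.cobounded ℝ) (𝓝 0) := by
    have h0 : Tendsto (fun r : ℝ => Real.pi⁻¹ * (4 * r⁻¹)) atTop (𝓝 0) := by
      simpa using (tendsto_inv_atTop_zero.const_mul (4 : ℝ)).const_mul Real.pi⁻¹
    have h1 : Tendsto (fun r : ℝ => r * (Real.pi⁻¹ * siAuxG r)) atTop (𝓝 0) := by
      refine squeeze_zero' ?_ ?_ h0
      · filter_upwards [eventually_gt_atTop 0] with r hr
        have := siAuxG_nonneg r
        positivity
      · filter_upwards [eventually_gt_atTop 0] with r hr
        calc r * (Real.pi⁻¹ * siAuxG r) ≤ r * (Real.pi⁻¹ * (4 * r⁻¹ ^ 2)) := by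
              gcongr
              exact siAuxG_le hr
          _ = Real.pi⁻¹ * (4 * r⁻¹) := by field_simp
    simpa using! h1.comp (tendsto_norm_cobounded_atTop (E := ℝ))
  have hmass : ∫ y : ℝ, Real.pi⁻¹ * siAuxG |y| = 1 := by
    rw [integral_const_mul, integral_comp_abs, integral_siAuxG_Ioi]
    field_simp
  refine (tendsto_integral_comp_smul_smul_of_integrable' (μ := volume) (x₀ := x)
    (fun y => mul_nonneg (inv_nonneg.2 Real.pi_pos.le) (siAuxG_nonneg |y|)) hmass hdecay
    (hcont.integrable_of_hasCompactSupport hsupp) hcont.continuousAt).congr' ?_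
  filter_upwards [eventually_gt_atTop 0] with a ha
  rw [← integral_const_mul]
  refine integral_congr_ae ?_
  filter_upwards [Measure.ae_ne volume x] with t ht
  rw [Tker_eq_neg_siAuxG ha (sub_ne_zero.2 ht.symm)]
  simp only [Module.finrank_self, pow_one, smul_eq_mul, abs_mul, abs_of_pos ha]
  ring
end

section
/- For every a > 0, the function T_a is integrable on ℝ and its Fourier transform satisfies ∫_{−∞}^{∞} T_a(x)·e^{iξx} dx = −π/(|ξ| + a) for every real ξ. -/
open Filter MeasureTheory Topology

/-- The Laplace transform of a real function on the half-line. -/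
noncomputable def laplaceHalfLine (h : ℝ → ℝ) (x : ℝ) : ℝ :=
  ∫ s in Set.Ioi (0 : ℝ), h s * Real.exp (-x * s)

theorem integrableOn_mul_exp_neg_mul {x : ℝ} (hx : 0 < x) :
    IntegrableOn (fun s : ℝ => s * Real.exp (-x * s)) (Set.Ioi 0) := by
  simpa using integrableOn_rpow_mul_exp_neg_mul_rpow (p := 1) (s := 1) (by norm_num) one_pos hx

theorem integrableOn_mul_exp_of_bounded {h : ℝ → ℝ} (hc : Continuous h) (hb : ∀ s, |h s| ≤ 1)
    {x : ℝ} (hx : 0 < x) :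
    IntegrableOn (fun s : ℝ => h s * Real.exp (-x * s)) (Set.Ioi 0) := by
  refine (integrableOn_exp_mul_Ioi (neg_lt_zero.mpr hx) 0).mono'
    (by fun_prop) (ae_of_all _ fun s => ?_)
  rw [norm_mul, Real.norm_eq_abs, Real.norm_eq_abs, Real.abs_exp]
  exact mul_le_of_le_one_left (Real.exp_pos _).le (hb s)

theorem integral_exp_neg_mul_Ioi_zero_s5 {x : ℝ} (hx : 0 < x) :
    ∫ s in Set.Ioi (0 : ℝ), Real.exp (-x * s) = 1 / x := by
  rw [integral_exp_mul_Ioi (neg_lt_zero.mpr hx)]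
  simp

theorem abs_laplaceHalfLine_le {h : ℝ → ℝ} (hb : ∀ s, |h s| ≤ 1) {x : ℝ} (hx : 0 < x) :
    |laplaceHalfLine h x| ≤ 1 / x := by
  rw [← integral_exp_neg_mul_Ioi_zero_s5 hx]
  rw [laplaceHalfLine, ← Real.norm_eq_abs]
  refine norm_integral_le_of_norm_le (integrableOn_exp_mul_Ioi (neg_lt_zero.mpr hx) 0)
    (ae_of_all _ fun s => ?_)
  rw [norm_mul, Real.norm_eq_abs, Real.norm_eq_abs, Real.abs_exp]
  exact mul_le_of_le_one_left (Real.exp_pos _).le (hb s)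

theorem tendsto_laplaceHalfLine_atTop {h : ℝ → ℝ} (hb : ∀ s, |h s| ≤ 1) :
    Tendsto (laplaceHalfLine h) atTop (𝓝 0) := by
  refine squeeze_zero_norm' ?_ (tendsto_const_nhds.div_atTop tendsto_id : Tendsto
    (fun x : ℝ => 1 / id x) atTop (𝓝 0))
  filter_upwards [eventually_gt_atTop 0] with x hx
  exact abs_laplaceHalfLine_le hb hx

theorem hasDerivAt_laplaceHalfLine {h : ℝ → ℝ} (hc : Continuous h) (hb : ∀ s, |h s| ≤ 1)
    {x : ℝ} (hx : 0 < x) :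
    HasDerivAt (laplaceHalfLine h) (-laplaceHalfLine (fun s => s * h s) x) x := by
  have key := (hasDerivAt_integral_of_dominated_loc_of_deriv_le
    (μ := volume.restrict (Set.Ioi (0 : ℝ))) (x₀ := x) (s := Set.Ioi (x / 2))
    (F := fun x s => h s * Real.exp (-x * s))
    (F' := fun x s => -(s * h s * Real.exp (-x * s)))
    (bound := fun s => s * Real.exp (-(x / 2) * s))
    (Ioi_mem_nhds (by linarith))
    (Eventually.of_forall fun y => by fun_prop)
    (integrableOn_mul_exp_of_bounded hc hb hx) (by fun_prop) ?_
    (integrableOn_mul_exp_neg_mul (half_pos hx)) ?_).2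
  · rwa [integral_neg] at key
  · filter_upwards [ae_restrict_mem measurableSet_Ioi] with s hs y hy
    have hs' : (0 : ℝ) < s := hs
    have hy' : x / 2 < y := hy
    rw [norm_neg, norm_mul, norm_mul, Real.norm_eq_abs, Real.norm_eq_abs, Real.norm_eq_abs,
      Real.abs_exp, abs_of_pos hs']
    have h1 : s * |h s| ≤ s := mul_le_of_le_one_right hs'.le (hb s)
    have h2 : Real.exp (-y * s) ≤ Real.exp (-(x / 2) * s) :=
      Real.exp_le_exp.mpr (by nlinarith)
    gcongr
  · refine ae_of_all _ fun s y _ => ?_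
    refine ((((hasDerivAt_id' y).neg.mul_const s).exp).const_mul (h s)).congr_deriv ?_
    simp only [Pi.neg_apply]
    ring

theorem continuous_inv_one_add_sq : Continuous fun s : ℝ => 1 / (1 + s ^ 2) :=
  continuous_const.div (by fun_prop) fun s => by positivity

theorem continuous_div_one_add_sq : Continuous fun s : ℝ => s * (1 / (1 + s ^ 2)) :=
  continuous_id.mul continuous_inv_one_add_sq

theorem abs_inv_one_add_sq_le (s : ℝ) : |1 / (1 + s ^ 2)| ≤ 1 := by
  rw [abs_of_pos (by positivity), div_le_one (by positivity)]
  nlinarith [sq_nonneg s]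

theorem abs_div_one_add_sq_le (s : ℝ) : |s * (1 / (1 + s ^ 2))| ≤ 1 := by
  rw [mul_one_div, abs_div, abs_of_pos (by positivity : (0 : ℝ) < 1 + s ^ 2),
    div_le_one (by positivity)]
  nlinarith [sq_nonneg (|s| - 1), sq_abs s]

/-- The auxiliary function `f` for the sine and cosine integrals. -/
noncomputable def auxF : ℝ → ℝ := laplaceHalfLine fun s => 1 / (1 + s ^ 2)

/-- The auxiliary function `g` for the sine and cosine integrals. -/
noncomputable def auxG : ℝ → ℝ := laplaceHalfLine fun s => s * (1 / (1 + s ^ 2))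

theorem hasDerivAt_auxF {x : ℝ} (hx : 0 < x) : HasDerivAt auxF (-auxG x) x :=
  hasDerivAt_laplaceHalfLine continuous_inv_one_add_sq abs_inv_one_add_sq_le hx

theorem hasDerivAt_auxG {x : ℝ} (hx : 0 < x) : HasDerivAt auxG (auxF x - 1 / x) x := by
  refine (hasDerivAt_laplaceHalfLine continuous_div_one_add_sq abs_div_one_add_sq_le
    hx).congr_deriv (Eq.symm ?_)
  rw [← integral_exp_neg_mul_Ioi_zero_s5 hx]
  simp only [auxF, laplaceHalfLine]
  rw [← integral_sub
    (integrableOn_mul_exp_of_bounded continuous_inv_one_add_sq abs_inv_one_add_sq_le hx)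
    (integrableOn_exp_mul_Ioi (neg_lt_zero.mpr hx) 0), ← integral_neg]
  congr 1 with s
  have : 1 + s ^ 2 ≠ 0 := by positivity
  field_simp
  ring

theorem tendsto_auxF : Tendsto auxF atTop (𝓝 0) :=
  tendsto_laplaceHalfLine_atTop abs_inv_one_add_sq_le

theorem tendsto_auxG : Tendsto auxG atTop (𝓝 0) :=
  tendsto_laplaceHalfLine_atTop abs_div_one_add_sq_le

/-- The improper integral of a function on `(x, ∞)`, in terms of an antiderivative vanishing at
infinity. -/
theorem limUnder_intervalIntegral_of_hasDerivAt {φ F : ℝ → ℝ} {x : ℝ} (hx : 0 < x)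
    (hφ : ContinuousOn φ (Set.Ioi 0)) (hF : ∀ y, 0 < y → HasDerivAt F (-φ y) y)
    (hlim : Tendsto F atTop (𝓝 0)) :
    limUnder atTop (fun R : ℝ => ∫ t in x..R, φ t) = F x := by
  apply Tendsto.limUnder_eq
  have h : Tendsto (fun R => F x - F R) atTop (𝓝 (F x)) := by
    simpa using hlim.const_sub (F x)
  refine h.congr' ?_
  filter_upwards [eventually_ge_atTop x] with R hR
  have hpos : ∀ y ∈ Set.uIcc x R, 0 < y := fun y hy => by
    rw [Set.uIcc_of_le hR] at hy
    exact hx.trans_le hy.1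
  rw [intervalIntegral.integral_eq_sub_of_hasDerivAt (f := fun y => -F y)
    (fun y hy => by simpa using (hF y (hpos y hy)).fun_neg)
    (hφ.mono hpos).intervalIntegrable]
  ring

theorem si_eq_s5 {x : ℝ} (hx : 0 < x) :
    si x = -(auxF x * Real.cos x + auxG x * Real.sin x) := by
  rw [si, limUnder_intervalIntegral_of_hasDerivAt
    (F := fun x => auxF x * Real.cos x + auxG x * Real.sin x) hx]
  · exact Real.continuous_sin.continuousOn.div continuousOn_id fun y hy => (ne_of_gt hy)
  · intro y hy
    refine (((hasDerivAt_auxF hy).mul (Real.hasDerivAt_cos y)).add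
      ((hasDerivAt_auxG hy).mul (Real.hasDerivAt_sin y))).congr_deriv ?_
    ring
  · simpa using (tendsto_auxF.zero_mul_isBoundedUnder_le
      (isBoundedUnder_of ⟨1, fun y => Real.abs_cos_le_one y⟩)).add
      (tendsto_auxG.zero_mul_isBoundedUnder_le
      (isBoundedUnder_of ⟨1, fun y => Real.abs_sin_le_one y⟩))

theorem ci_eq_s5 {x : ℝ} (hx : 0 < x) :
    ci x = -(auxG x * Real.cos x - auxF x * Real.sin x) := by
  rw [ci, limUnder_intervalIntegral_of_hasDerivAt
    (F := fun x => auxG x * Real.cos x - auxF x * Real.sin x) hx]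
  · exact Real.continuous_cos.continuousOn.div continuousOn_id fun y hy => (ne_of_gt hy)
  · intro y hy
    refine (((hasDerivAt_auxG hy).mul (Real.hasDerivAt_cos y)).sub
      ((hasDerivAt_auxF hy).mul (Real.hasDerivAt_sin y))).congr_deriv ?_
    ring
  · simpa using (tendsto_auxG.zero_mul_isBoundedUnder_le
      (isBoundedUnder_of ⟨1, fun y => Real.abs_cos_le_one y⟩)).sub
      (tendsto_auxF.zero_mul_isBoundedUnder_le
      (isBoundedUnder_of ⟨1, fun y => Real.abs_sin_le_one y⟩))

theorem Tker_eq {a x : ℝ} (ha : 0 < a) (hx : x ≠ 0) : Tker a x = -auxG (a * |x|) := by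
  have h : 0 < a * |x| := mul_pos ha (abs_pos.mpr hx)
  rw [Tker, si_eq_s5 h, ci_eq_s5 h]
  linear_combination (-auxG (a * |x|)) * Real.sin_sq_add_cos_sq (a * |x|)

theorem integral_Ioi_sq_div_mul {c : ℝ} (hc : 0 ≤ c) :
    ∫ t in Set.Ioi (0 : ℝ), t ^ 2 / ((1 + t ^ 2) * (t ^ 2 + c ^ 2))
      = Real.pi / (2 * (1 + c)) := by
  have hnn : ∀ t ∈ Set.Ioi (0 : ℝ), 0 ≤ t ^ 2 / ((1 + t ^ 2) * (t ^ 2 + c ^ 2)) :=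
    fun t _ => by positivity
  have hat : Tendsto Real.arctan atTop (𝓝 (Real.pi / 2)) :=
    Real.tendsto_arctan_atTop.mono_right nhdsWithin_le_nhds
  by_cases h1 : c = 1
  · subst h1
    have hlim : Tendsto (fun t : ℝ => Real.arctan t / 2 - t / (1 + t ^ 2) / 2) atTop
        (𝓝 (Real.pi / 2 / 2 - 0 / 2)) := by
      refine (hat.div_const 2).sub (Tendsto.div_const ?_ 2)
      refine squeeze_zero_norm' ?_ (tendsto_inv_atTop_zero (𝕜 := ℝ))
      filter_upwards [eventually_gt_atTop 0] with t ht
      rw [Real.norm_of_nonneg (by positivity), div_le_iff₀ (by positivity)]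
      field_simp
      nlinarith
    rw [integral_Ioi_of_hasDerivAt_of_nonneg' (fun t _ => ?_) hnn hlim]
    · simp
      ring
    · have h0 : 1 + t ^ 2 ≠ 0 := by positivity
      refine (((Real.hasDerivAt_arctan t).div_const 2).sub (((hasDerivAt_id' t).div
        ((hasDerivAt_pow 2 t).const_add 1) h0).div_const 2)).congr_deriv ?_
      have h0' : t ^ 2 + 1 ≠ 0 := by positivity
      field_simp
      ring
  · have h2 : 1 - c ^ 2 ≠ 0 := fun h => h1 (by nlinarith)
    have h3 : 1 - c ≠ 0 := sub_ne_zero.mpr (Ne.symm h1)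
    rcases hc.eq_or_lt with rfl | hc
    · rw [integral_Ioi_of_hasDerivAt_of_nonneg (g := Real.arctan)
        Real.continuous_arctan.continuousWithinAt (fun t ht => ?_) hnn hat]
      · simp
      · have ht' : t ≠ 0 := ne_of_gt ht
        convert Real.hasDerivAt_arctan t using 1
        have : 1 + t ^ 2 ≠ 0 := by positivity
        field_simp
        simp
    · have hlim : Tendsto (fun t : ℝ => (Real.arctan t - c * Real.arctan (t / c)) / (1 - c ^ 2))
          atTop (𝓝 ((Real.pi / 2 - c * (Real.pi / 2)) / (1 - c ^ 2))) :=
        (hat.sub ((hat.comp (tendsto_id.atTop_div_const hc)).const_mul c)).div_const _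
      rw [integral_Ioi_of_hasDerivAt_of_nonneg' (fun t _ => ?_) hnn hlim]
      · have : 1 - c ^ 2 = (1 - c) * (1 + c) := by ring
        have : 1 + c ≠ 0 := by positivity
        simp
        field_simp
        ring
      · refine (((Real.hasDerivAt_arctan t).sub ((((hasDerivAt_id' t).div_const
          c).arctan).const_mul c)).div_const (1 - c ^ 2)).congr_deriv ?_
        have h4 : 1 + t ^ 2 ≠ 0 := by positivity
        have h5 : t ^ 2 + c ^ 2 ≠ 0 := by positivity
        have h6 : c ^ 2 + t ^ 2 ≠ 0 := by positivity
        field_simp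
        ring

theorem integrable_and_integral_exp_neg_abs_mul_exp {b : ℝ} (hb : 0 < b) (ξ : ℝ) :
    Integrable (fun x : ℝ => (Real.exp (-b * |x|) : ℂ) * Complex.exp (Complex.I * ξ * x)) ∧
    ∫ x : ℝ, (Real.exp (-b * |x|) : ℂ) * Complex.exp (Complex.I * ξ * x)
      = ((2 * b / (b ^ 2 + ξ ^ 2) : ℝ) : ℂ) := by
  have hR : Set.EqOn (fun x : ℝ => Complex.exp ((-b + Complex.I * ξ) * x))
      (fun x : ℝ => (Real.exp (-b * |x|) : ℂ) * Complex.exp (Complex.I * ξ * x))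
      (Set.Ioi 0) := fun x hx => by
    simp only [abs_of_pos (show 0 < x from hx)]
    push_cast
    rw [← Complex.exp_add]
    ring_nf
  have hL : Set.EqOn (fun x : ℝ => Complex.exp ((b + Complex.I * ξ) * x))
      (fun x : ℝ => (Real.exp (-b * |x|) : ℂ) * Complex.exp (Complex.I * ξ * x))
      (Set.Iic 0) := fun x hx => by
    simp only [abs_of_nonpos (show x ≤ 0 from hx)]
    push_cast
    rw [← Complex.exp_add]
    ring_nf
  have hre1 : (-b + Complex.I * ξ : ℂ).re < 0 := by simpa using hb
  have hre2 : 0 < (b + Complex.I * ξ : ℂ).re := by simpa using hb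
  have iR := (integrableOn_exp_mul_complex_Ioi hre1 0).congr_fun hR measurableSet_Ioi
  have iL := (integrableOn_exp_mul_complex_Iic hre2 0).congr_fun hL measurableSet_Iic
  constructor
  · rw [← integrableOn_univ, ← Set.Iic_union_Ioi (a := (0 : ℝ))]
    exact iL.union iR
  · rw [← intervalIntegral.integral_Iic_add_Ioi iL iR, ← setIntegral_congr_fun measurableSet_Ioi hR,
      ← setIntegral_congr_fun measurableSet_Iic hL, integral_exp_mul_complex_Ioi hre1,
      integral_exp_mul_complex_Iic hre2]
    have n1 : (-b + Complex.I * ξ : ℂ) ≠ 0 := fun h => by simp [h] at hre1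
    have n2 : (b + Complex.I * ξ : ℂ) ≠ 0 := fun h => by simp [h] at hre2
    have n3 : (b ^ 2 + ξ ^ 2 : ℂ) ≠ 0 := by
      have : (b ^ 2 + ξ ^ 2 : ℝ) ≠ 0 := by positivity
      exact_mod_cast this
    push_cast
    simp only [mul_zero, Complex.exp_zero]
    field_simp
    linear_combination (-2 * b * ξ ^ 2 : ℂ) * Complex.I_sq

theorem integral_exp_neg_mul_abs {b : ℝ} (hb : 0 < b) :
    ∫ x : ℝ, Real.exp (-b * |x|) = 2 / b := by
  rw [integral_comp_abs (f := fun x => Real.exp (-b * x)),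
    integral_exp_neg_mul_Ioi_zero_s5 hb, mul_one_div]

/-- The integrand obtained by inserting the Laplace representation of `auxG` into the Fourier
integral of `T_a`. -/
noncomputable def fourierLaplaceIntegrand (a ξ : ℝ) (x t : ℝ) : ℂ :=
  ((t * (1 / (1 + t ^ 2)) : ℝ) : ℂ) *
    ((Real.exp (-(a * t) * |x|) : ℂ) * Complex.exp (Complex.I * ξ * x))

theorem integral_fourierLaplaceIntegrand_right (a ξ x : ℝ) :
    ∫ t in Set.Ioi (0 : ℝ), fourierLaplaceIntegrand a ξ x t
      = (auxG (a * |x|) : ℂ) * Complex.exp (Complex.I * ξ * x) := by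
  rw [auxG, laplaceHalfLine, ← integral_complex_ofReal, ← integral_mul_const]
  congr 1 with t
  rw [fourierLaplaceIntegrand, ← mul_assoc, ← Complex.ofReal_mul]
  ring_nf

theorem norm_fourierLaplaceIntegrand (a ξ x : ℝ) {t : ℝ} (ht : 0 < t) :
    ‖fourierLaplaceIntegrand a ξ x t‖ =
      t * (1 / (1 + t ^ 2)) * Real.exp (-(a * t) * |x|) := by
  have h : ‖Complex.exp (Complex.I * ξ * x)‖ = 1 := by
    simp [Complex.norm_exp]
  rw [fourierLaplaceIntegrand, norm_mul, norm_mul, h, Complex.norm_real, Complex.norm_real,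
    Real.norm_of_nonneg (by positivity), Real.norm_of_nonneg (by positivity), mul_one]

theorem integrable_fourierLaplaceIntegrand {a : ℝ} (ha : 0 < a) (ξ : ℝ) :
    Integrable (Function.uncurry (fourierLaplaceIntegrand a ξ))
      (volume.prod (volume.restrict (Set.Ioi (0 : ℝ)))) := by
  have hcont : Continuous (Function.uncurry (fourierLaplaceIntegrand a ξ)) := by
    have h := Complex.continuous_ofReal.comp
      (continuous_div_one_add_sq.comp (continuous_snd (X := ℝ) (Y := ℝ)))
    exact h.mul (by fun_prop)
  rw [integrable_prod_iff' hcont.aestronglyMeasurable]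
  constructor
  · filter_upwards [ae_restrict_mem measurableSet_Ioi] with t ht
    simpa only [Function.uncurry_apply_pair, fourierLaplaceIntegrand] using
      (integrable_and_integral_exp_neg_abs_mul_exp (mul_pos ha ht) ξ).1.const_mul _
  · have hint : IntegrableOn (fun t : ℝ => 2 / a * (1 + t ^ 2)⁻¹) (Set.Ioi 0) :=
      (integrable_inv_one_add_sq.const_mul _).integrableOn
    refine hint.congr_fun (fun t ht => ?_) measurableSet_Ioi
    have ht' : (0 : ℝ) < t := ht
    simp only [Function.uncurry_apply_pair, norm_fourierLaplaceIntegrand _ _ _ ht']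
    rw [integral_const_mul, integral_exp_neg_mul_abs (mul_pos ha ht')]
    field_simp

theorem integral_fourierLaplaceIntegrand {a : ℝ} (ha : 0 < a) (ξ : ℝ) :
    ∫ t in Set.Ioi (0 : ℝ), ∫ x : ℝ, fourierLaplaceIntegrand a ξ x t
      = ((Real.pi / (|ξ| + a) : ℝ) : ℂ) := by
  have hpt : Set.EqOn (fun t : ℝ => ∫ x : ℝ, fourierLaplaceIntegrand a ξ x t)
      (fun t : ℝ => ((2 / a * (t ^ 2 / ((1 + t ^ 2) * (t ^ 2 + (|ξ| / a) ^ 2))) : ℝ) : ℂ))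
      (Set.Ioi 0) := fun t ht => by
    have ht' : (0 : ℝ) < t := ht
    simp only [fourierLaplaceIntegrand]
    rw [integral_const_mul, (integrable_and_integral_exp_neg_abs_mul_exp (mul_pos ha ht') ξ).2,
      ← Complex.ofReal_mul, div_pow, sq_abs]
    congr 1
    field_simp
  rw [setIntegral_congr_fun measurableSet_Ioi hpt, integral_complex_ofReal, integral_const_mul,
    integral_Ioi_sq_div_mul (by positivity)]
  congr 1
  field_simp
  ring

theorem Tker_mul_exp_ae_eq {a : ℝ} (ha : 0 < a) (ξ : ℝ) :
    (fun x : ℝ => (Tker a x : ℂ) * Complex.exp (Complex.I * ξ * x)) =ᵐ[volume]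
      fun x => -∫ t in Set.Ioi (0 : ℝ), fourierLaplaceIntegrand a ξ x t := by
  filter_upwards [Measure.ae_ne volume (0 : ℝ)] with x hx
  rw [integral_fourierLaplaceIntegrand_right, Tker_eq ha hx]
  push_cast
  ring

/-- `T_a` is integrable and its Fourier transform
`∫ T_a(x) e^{iξx} dx` equals `-π/(|ξ|+a)`. -/
theorem stmt5 (a : ℝ) (ha : 0 < a) :
    Integrable (fun x : ℝ => Tker a x) ∧
      ∀ ξ : ℝ, (∫ x : ℝ, (Tker a x : ℂ) * Complex.exp (Complex.I * ξ * x))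
        = -(Real.pi : ℂ) / ((|ξ| : ℝ) + a) := by
  constructor
  · have h := ((integrable_fourierLaplaceIntegrand ha 0).integral_prod_left.neg.congr
      (Tker_mul_exp_ae_eq ha 0).symm).re
    simpa using h
  · intro ξ
    rw [integral_congr_ae (Tker_mul_exp_ae_eq ha ξ), integral_neg,
      integral_integral_swap (integrable_fourierLaplaceIntegrand ha ξ),
      integral_fourierLaplaceIntegrand ha ξ]
    push_cast
    ring
end

section
/- For every λ with 0 < λ < 1, the integral ∫_0^∞ u^λ · |si(u)·sin(u) + ci(u)·cos(u)| du is finite. (Equivalently, with Σ₂(u) := −u·(si(u)·sin u + ci(u)·cos u), the integral ∫_0^∞ |Σ₂(u)|/u^{1−λ} du converges.) -/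
open Filter MeasureTheory Topology

theorem intervalIntegrable_div_pow {g : ℝ → ℝ} (hg : Continuous g) (k : ℕ) {x R : ℝ}
    (hx : 0 < x) (hR : 0 < R) :
    IntervalIntegrable (fun t => g t / t ^ k) volume x R := by
  refine ContinuousOn.intervalIntegrable fun t ht => ?_
  have ht0 : 0 < t := lt_of_lt_of_le (lt_min hx hR) ht.1
  exact (hg.continuousAt.div (continuousAt_id.pow _) (pow_ne_zero _ ht0.ne')).continuousWithinAt

theorem integral_div_pow_eq {g G : ℝ → ℝ} (hg : Continuous g)
    (hG : ∀ t, HasDerivAt G (g t) t) (k : ℕ) {x R : ℝ} (hx : 0 < x) (hR : 0 < R) :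
    ∫ t in x..R, g t / t ^ k =
      G R / R ^ k - G x / x ^ k + k * ∫ t in x..R, G t / t ^ (k + 1) := by
  have hGc : Continuous G := continuous_iff_continuousAt.2 fun t => (hG t).continuousAt
  have h1 := intervalIntegrable_div_pow hg k hx hR
  have h2 := (intervalIntegrable_div_pow hGc (k + 1) hx hR).const_mul (k : ℝ)
  have key := intervalIntegral.integral_eq_sub_of_hasDerivAt (a := x) (b := R)
    (f := fun t => G t / t ^ k)
    (f' := fun t => g t / t ^ k - k * (G t / t ^ (k + 1))) (fun t ht => by
      have ht0 : 0 < t := lt_of_lt_of_le (lt_min hx hR) ht.1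
      refine ((hG t).div (hasDerivAt_pow k t) (pow_ne_zero _ ht0.ne')).congr_deriv ?_
      rcases k with _ | k
      · simp
      · simp only [Nat.add_sub_cancel]
        field_simp
        ring) (h1.sub h2)
  rw [intervalIntegral.integral_sub h1 h2, intervalIntegral.integral_const_mul] at key
  linarith

theorem mul_abs_integral_div_pow_le {G : ℝ → ℝ} {B : ℝ} (hB : ∀ t, |G t| ≤ B)
    (k : ℕ) {x R : ℝ} (hx : 0 < x) (hxR : x ≤ R) :
    k * |∫ t in x..R, G t / t ^ (k + 1)| ≤ B * (1 / x ^ k - 1 / R ^ k) := by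
  have hR := hx.trans_le hxR
  have h := integral_div_pow_eq (g := fun _ => 0) (G := fun _ => B) continuous_const
    (fun t => hasDerivAt_const t B) k hx hR
  have hle : |∫ t in x..R, G t / t ^ (k + 1)| ≤ ∫ t in x..R, B / t ^ (k + 1) := by
    rw [← Real.norm_eq_abs]
    refine intervalIntegral.norm_integral_le_of_norm_le hxR (ae_of_all _ fun t ht => ?_)
      (intervalIntegrable_div_pow (g := fun _ => B) continuous_const _ hx hR)
    have ht0 : 0 < t := hx.trans ht.1
    rw [Real.norm_eq_abs, abs_div, abs_of_pos (pow_pos ht0 _)]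
    gcongr
    exact hB t
  have := mul_le_mul_of_nonneg_left hle (Nat.cast_nonneg (α := ℝ) k)
  simp only [zero_div, intervalIntegral.integral_zero] at h
  have e : B * (1 / x ^ k - 1 / R ^ k) = B / x ^ k - B / R ^ k := by ring
  linarith

theorem exists_tendsto_integral_div {g G : ℝ → ℝ} (hg : Continuous g)
    (hG : ∀ t, HasDerivAt G (g t) t) {B : ℝ} (hB : ∀ t, |G t| ≤ B) {x : ℝ} (hx : 0 < x) :
    ∃ L, Tendsto (fun R : ℝ => ∫ t in x..R, g t / t) atTop (𝓝 L) := by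
  have hGc : Continuous G := continuous_iff_continuousAt.2 fun t => (hG t).continuousAt
  have hint : IntegrableOn (fun t => G t / t ^ 2) (Set.Ioi x) := by
    refine Integrable.mono'
      ((integrableOn_Ioi_rpow_of_lt (a := -2) (by norm_num) hx).const_mul B)
      (ContinuousOn.aestronglyMeasurable (fun t ht => ?_) measurableSet_Ioi)
      ((ae_restrict_iff' measurableSet_Ioi).2 (ae_of_all _ fun t ht => ?_))
    · have ht0 : 0 < t := hx.trans ht
      exact (hGc.continuousAt.div (continuousAt_id.pow _) (pow_ne_zero _ ht0.ne')).continuousWithinAt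
    · have ht0 : 0 < t := hx.trans ht
      rw [Real.norm_eq_abs, abs_div, abs_of_pos (pow_pos ht0 _), Real.rpow_neg ht0.le,
        Real.rpow_two, div_eq_mul_inv]
      gcongr
      exact hB t
  have h0 : Tendsto (fun R : ℝ => G R / R) atTop (𝓝 0) := by
    refine squeeze_zero_norm' (a := fun R => B / R) ?_ (tendsto_const_nhds.div_atTop tendsto_id)
    filter_upwards [eventually_gt_atTop 0] with R hR
    rw [Real.norm_eq_abs, abs_div, abs_of_pos hR]
    gcongr
    exact hB R
  have h := (h0.sub_const (G x / x)).add (intervalIntegral_tendsto_integral_Ioi x hint tendsto_id)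
  refine ⟨_, h.congr' ?_⟩
  filter_upwards [eventually_gt_atTop 0] with R hR
  have := integral_div_pow_eq hg hG 1 hx hR
  simp only [pow_one, Nat.cast_one, one_mul] at this
  exact this.symm

theorem tendsto_integral_sin_div {x : ℝ} (hx : 0 < x) :
    Tendsto (fun R : ℝ => ∫ t in x..R, Real.sin t / t) atTop (𝓝 (-si x)) := by
  obtain ⟨L, hL⟩ := exists_tendsto_integral_div (G := fun t => -Real.cos t)
    Real.continuous_sin (fun t => by simpa using (Real.hasDerivAt_cos t).fun_neg)
    (fun t => by simpa using Real.abs_cos_le_one t) hx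
  simpa [si, hL.limUnder_eq] using hL

theorem tendsto_integral_cos_div {x : ℝ} (hx : 0 < x) :
    Tendsto (fun R : ℝ => ∫ t in x..R, Real.cos t / t) atTop (𝓝 (-ci x)) := by
  obtain ⟨L, hL⟩ := exists_tendsto_integral_div (G := Real.sin)
    Real.continuous_cos Real.hasDerivAt_sin Real.abs_sin_le_one hx
  simpa [ci, hL.limUnder_eq] using hL

theorem continuousOn_of_tendsto_integral_div {g F : ℝ → ℝ} (hg : Continuous g)
    (hF : ∀ x, 0 < x → Tendsto (fun R : ℝ => ∫ t in x..R, g t / t) atTop (𝓝 (-F x))) :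
    ContinuousOn F (Set.Ioi 0) := by
  have hi : ∀ {x R : ℝ}, 0 < x → 0 < R →
      IntervalIntegrable (fun t => g t / t) volume x R := fun hx hR => by
    simpa using intervalIntegrable_div_pow hg 1 hx hR
  have hEq : ∀ x ∈ Set.Ioi (0 : ℝ), F x = F 1 - ∫ t in x..1, g t / t := by
    intro x hx
    have h := (hF 1 one_pos).const_add (∫ t in x..1, g t / t)
    have h' : Tendsto (fun R : ℝ => ∫ t in x..R, g t / t) atTop
        (𝓝 ((∫ t in x..1, g t / t) + -F 1)) := by
      refine h.congr' ?_
      filter_upwards [eventually_gt_atTop 0] with R hR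
      exact intervalIntegral.integral_add_adjacent_intervals (hi hx one_pos) (hi one_pos hR)
    linarith [tendsto_nhds_unique (hF x hx) h']
  refine ContinuousOn.congr (fun x hx => ?_) hEq
  have hc : ∀ y ∈ Set.Ioi (0 : ℝ), ContinuousAt (fun t => g t / t) y := fun y hy =>
    hg.continuousAt.div continuousAt_id (ne_of_gt hy)
  have hd := intervalIntegral.integral_hasDerivAt_left (hi hx one_pos)
    (ContinuousAt.stronglyMeasurableAtFilter isOpen_Ioi hc x hx) (hc x hx)
  exact (continuousAt_const.sub hd.continuousAt).continuousWithinAt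

theorem tendsto_integral_cos_sub_div {u : ℝ} (hu : 0 < u) :
    Tendsto (fun R : ℝ => ∫ t in u..R, Real.cos (t - u) / t) atTop
      (𝓝 (-(si u * Real.sin u + ci u * Real.cos u))) := by
  have h := ((tendsto_integral_sin_div hu).mul_const (Real.sin u)).add
    ((tendsto_integral_cos_div hu).mul_const (Real.cos u))
  rw [show -(si u * Real.sin u + ci u * Real.cos u) =
    -si u * Real.sin u + -ci u * Real.cos u by ring]
  refine h.congr' ?_
  filter_upwards [eventually_gt_atTop 0] with R hR
  have h1 : IntervalIntegrable (fun t => Real.sin t / t) volume u R := by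
    simpa using intervalIntegrable_div_pow Real.continuous_sin 1 hu hR
  have h2 : IntervalIntegrable (fun t => Real.cos t / t) volume u R := by
    simpa using intervalIntegrable_div_pow Real.continuous_cos 1 hu hR
  rw [← intervalIntegral.integral_mul_const, ← intervalIntegral.integral_mul_const,
    ← intervalIntegral.integral_add (h1.mul_const _) (h2.mul_const _)]
  congr 1
  ext t
  rw [Real.cos_sub]
  ring

theorem hasDerivAt_sin_sub (u t : ℝ) :
    HasDerivAt (fun t => Real.sin (t - u)) (Real.cos (t - u)) t := by
  simpa using ((hasDerivAt_id t).sub_const u).sin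

theorem hasDerivAt_one_sub_cos_sub (u t : ℝ) :
    HasDerivAt (fun t => 1 - Real.cos (t - u)) (Real.sin (t - u)) t := by
  simpa using (((hasDerivAt_id t).sub_const u).cos).const_sub 1

theorem abs_one_sub_cos_le_two (x : ℝ) : |1 - Real.cos x| ≤ 2 := by
  rw [abs_le]
  constructor <;> linarith [Real.neg_one_le_cos x, Real.cos_le_one x]

theorem integral_cos_sub_div_eq {u R : ℝ} (hu : 0 < u) (hR : 0 < R) :
    ∫ t in u..R, Real.cos (t - u) / t =
      Real.sin (R - u) / R + ∫ t in u..R, Real.sin (t - u) / t ^ 2 := by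
  simpa using integral_div_pow_eq (by fun_prop) (hasDerivAt_sin_sub u) 1 hu hR

theorem abs_si_mul_sin_add_ci_mul_cos_le_inv {u : ℝ} (hu : 0 < u) :
    |si u * Real.sin u + ci u * Real.cos u| ≤ 1 / u := by
  rw [← abs_neg]
  refine le_of_tendsto (tendsto_integral_cos_sub_div hu).abs ?_
  filter_upwards [eventually_ge_atTop u] with R hR
  have hR0 := hu.trans_le hR
  rw [integral_cos_sub_div_eq hu hR0]
  have h1 : |Real.sin (R - u) / R| ≤ 1 / R := by
    rw [abs_div, abs_of_pos hR0]
    gcongr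
    exact Real.abs_sin_le_one _
  have h2 := mul_abs_integral_div_pow_le (G := fun t => Real.sin (t - u))
    (fun t => Real.abs_sin_le_one _) 1 hu hR
  simp only [Nat.cast_one, one_mul, pow_one, Nat.reduceAdd] at h2
  linarith [abs_add_le (Real.sin (R - u) / R) (∫ t in u..R, Real.sin (t - u) / t ^ 2)]

theorem abs_si_mul_sin_add_ci_mul_cos_le_two_div_sq {u : ℝ} (hu : 0 < u) :
    |si u * Real.sin u + ci u * Real.cos u| ≤ 2 / u ^ 2 := by
  rw [← abs_neg]
  have hlim : Tendsto (fun R : ℝ => 1 / R + 2 / u ^ 2) atTop (𝓝 (2 / u ^ 2)) := by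
    simpa using (tendsto_const_nhds (x := (1 : ℝ)).div_atTop tendsto_id).add_const (2 / u ^ 2)
  refine le_of_tendsto_of_tendsto (tendsto_integral_cos_sub_div hu).abs hlim ?_
  filter_upwards [eventually_ge_atTop u] with R hR
  have hR0 := hu.trans_le hR
  have h1 : |Real.sin (R - u) / R| ≤ 1 / R := by
    rw [abs_div, abs_of_pos hR0]
    gcongr
    exact Real.abs_sin_le_one _
  have h2 : |(1 - Real.cos (R - u)) / R ^ 2| ≤ 2 / R ^ 2 := by
    rw [abs_div, abs_of_pos (pow_pos hR0 2)]
    gcongr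
    exact abs_one_sub_cos_le_two _
  have h3 := mul_abs_integral_div_pow_le (G := fun t => 1 - Real.cos (t - u))
    (fun t => abs_one_sub_cos_le_two _) 2 hu hR
  have h4 : ∫ t in u..R, Real.sin (t - u) / t ^ 2 =
      (1 - Real.cos (R - u)) / R ^ 2 + 2 * ∫ t in u..R, (1 - Real.cos (t - u)) / t ^ 3 := by
    simpa using integral_div_pow_eq (by fun_prop) (hasDerivAt_one_sub_cos_sub u) 2 hu hR0
  rw [integral_cos_sub_div_eq hu hR0, h4]
  simp only [Nat.cast_ofNat, Nat.reduceAdd] at h3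
  refine (abs_add_le _ _).trans ?_
  have h5 := abs_add_le ((1 - Real.cos (R - u)) / R ^ 2)
    (2 * ∫ t in u..R, (1 - Real.cos (t - u)) / t ^ 3)
  rw [abs_mul, abs_two] at h5
  have e : 2 * (1 / u ^ 2 - 1 / R ^ 2) = 2 / u ^ 2 - 2 / R ^ 2 := by ring
  linarith

/-- for `0 < λ < 1`, `∫_0^∞ u^λ |si(u) sin u + ci(u) cos u| du < ∞`. -/
theorem stmt14 (lam : ℝ) (hlam0 : 0 < lam) (hlam1 : lam < 1) :
    IntegrableOn (fun u : ℝ => u ^ lam * |si u * Real.sin u + ci u * Real.cos u|)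
      (Set.Ioi 0) := by
  have hsi := continuousOn_of_tendsto_integral_div Real.continuous_sin
    fun _ => tendsto_integral_sin_div
  have hci := continuousOn_of_tendsto_integral_div Real.continuous_cos
    fun _ => tendsto_integral_cos_div
  have hcont : ContinuousOn
      (fun u : ℝ => u ^ lam * |si u * Real.sin u + ci u * Real.cos u|) (Set.Ioi 0) :=
    (continuousOn_id.rpow_const fun u hu => Or.inl (ne_of_gt hu)).mul
      ((hsi.mul Real.continuous_sin.continuousOn).add
        (hci.mul Real.continuous_cos.continuousOn)).abs
  rw [← Set.Ioc_union_Ioi_eq_Ioi (zero_le_one (α := ℝ))]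
  refine IntegrableOn.union ?_ ?_
  · have hint : IntegrableOn (fun u : ℝ => u ^ (lam - 1)) (Set.Ioc 0 1) :=
      (integrableOn_Ioc_iff_integrableOn_Ioo).2
        ((intervalIntegral.integrableOn_Ioo_rpow_iff one_pos).2 (by linarith))
    refine Integrable.mono' hint
      ((hcont.mono fun u hu => hu.1).aestronglyMeasurable measurableSet_Ioc)
      ((ae_restrict_iff' measurableSet_Ioc).2 (ae_of_all _ fun u hu => ?_))
    have hu0 : 0 < u := hu.1
    rw [Real.norm_of_nonneg (by positivity), Real.rpow_sub hu0, Real.rpow_one, ← mul_one_div]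
    gcongr
    exact abs_si_mul_sin_add_ci_mul_cos_le_inv hu0
  · have hint : IntegrableOn (fun u : ℝ => 2 * u ^ (lam - 2)) (Set.Ioi 1) :=
      Integrable.const_mul
        (integrableOn_Ioi_rpow_of_lt (a := lam - 2) (by linarith) one_pos) 2
    refine Integrable.mono' hint
      ((hcont.mono (Set.Ioi_subset_Ioi zero_le_one)).aestronglyMeasurable measurableSet_Ioi)
      ((ae_restrict_iff' measurableSet_Ioi).2 (ae_of_all _ fun u hu => ?_))
    have hu0 : (0 : ℝ) < u := one_pos.trans (Set.mem_Ioi.1 hu)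
    rw [Real.norm_of_nonneg (by positivity), Real.rpow_sub hu0, Real.rpow_two,
      show 2 * (u ^ lam / u ^ 2) = u ^ lam * (2 / u ^ 2) by ring]
    gcongr
    exact abs_si_mul_sin_add_ci_mul_cos_le_two_div_sq hu0
end
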